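/- Let R be a commutative noetherian ring and f a grade consistent function on Spec R. Then for each prime ideal p of R there exists a finitely generated R-module E such that pd_R E < ∞, pd_{R_q} E_q ≤ f(q) for all primes q, and pd_{R_p} E_p = f(p). -/

import Mathlib

universe u

open CategoryTheory

namespace ResolvPaper

variable (R : Type u) [CommRing R]

/-- `IsSES f g` means `0 → A → B → C → 0` is a short exact sequence. -/
def IsSES {R : Type u} [CommRing R] {A B C : Type u} [AddCommGroup A] [Module R A]
    [AddCommGroup B] [Module R B] [AddCommGroup C] [Module R C]
    (f : A →ₗ[R] B) (g : B →ₗ[R] C) : Prop :=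
  Function.Injective f ∧ Function.Surjective g ∧ LinearMap.range f = LinearMap.ker g

/-- A resolving subcategory of `mod R`, viewed as a set of bundled modules
closed under isomorphism, containing the finitely generated projective modules, and closed
under direct summands, extensions and syzygies. -/
structure IsResolving (𝒳 : Set (ModuleCat.{u} R)) : Prop where
  fg : ∀ M ∈ 𝒳, Module.Finite R M
  iso_closed : ∀ M N : ModuleCat.{u} R, Nonempty (M ≃ₗ[R] N) → M ∈ 𝒳 → N ∈ 𝒳
  proj_mem : ∀ M : ModuleCat.{u} R, Module.Finite R M → Module.Projective R M → M ∈ 𝒳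
  summand_closed : ∀ M N : ModuleCat.{u} R, ModuleCat.of R (↥M × ↥N) ∈ 𝒳 → M ∈ 𝒳
  ext_closed : ∀ (A B C : ModuleCat.{u} R) (f : A →ₗ[R] B) (g : B →ₗ[R] C),
    IsSES f g → A ∈ 𝒳 → C ∈ 𝒳 → B ∈ 𝒳
  syzygy_closed : ∀ (K P M : ModuleCat.{u} R) (f : K →ₗ[R] P) (g : P →ₗ[R] M),
    IsSES f g → Module.Finite R K → Module.Finite R P → Module.Projective R P →
    M ∈ 𝒳 → K ∈ 𝒳

/-- The resolving closure: the smallest resolving subcategory containing `S`. -/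
def resClosure (S : Set (ModuleCat.{u} R)) : Set (ModuleCat.{u} R) :=
  ⋂₀ {𝒳 | IsResolving R 𝒳 ∧ S ⊆ 𝒳}

/-- An extension-closed subcategory of `mod R`: closed under isomorphism,
direct summands and extensions. -/
def IsExtClosed (𝒳 : Set (ModuleCat.{u} R)) : Prop :=
  (∀ M N : ModuleCat.{u} R, Nonempty (M ≃ₗ[R] N) → M ∈ 𝒳 → N ∈ 𝒳) ∧
  (∀ M N : ModuleCat.{u} R, ModuleCat.of R (↥M × ↥N) ∈ 𝒳 → M ∈ 𝒳) ∧
  (∀ (A B C : ModuleCat.{u} R) (f : A →ₗ[R] B) (g : B →ₗ[R] C),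
    IsSES f g → A ∈ 𝒳 → C ∈ 𝒳 → B ∈ 𝒳)

/-- The extension closure of a set of modules. -/
def extClosure (S : Set (ModuleCat.{u} R)) : Set (ModuleCat.{u} R) :=
  ⋂₀ {𝒳 | IsExtClosed R 𝒳 ∧ S ⊆ 𝒳}

/-- `add R`: direct summands of finite free modules. -/
def addR : Set (ModuleCat.{u} R) :=
  {M | ∃ (n : ℕ) (N : ModuleCat.{u} R), Nonempty ((↥M × ↥N) ≃ₗ[R] (Fin n → R))}

/-- `pdLE n M` : the projective dimension of `M` is at most `n`. -/
def pdLE : ℕ → ModuleCat.{u} R → Prop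
  | 0, M => Module.Projective R M
  | n+1, M => ∃ (K P : ModuleCat.{u} R) (f : K →ₗ[R] P) (g : P →ₗ[R] M),
      Module.Finite R P ∧ Module.Projective R P ∧ IsSES f g ∧ pdLE n K

/-- The projective dimension, an element of `WithBot ℕ∞`; the zero module
has projective dimension `⊥ = -∞`. -/
noncomputable def pdim (M : ModuleCat.{u} R) : WithBot ℕ∞ :=
  sInf {x : WithBot ℕ∞ | (x = ⊥ ∧ Subsingleton M) ∨ ∃ n : ℕ, x = (n : ℕ∞) ∧ pdLE R n M}

/-- The depth of `M` with respect to the ideal `I`: the supremum of lengths of weakly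
`M`-regular sequences contained in `I`.  The zero module has depth `∞`. -/
noncomputable def depthE (I : Ideal R) (M : Type u) [AddCommGroup M] [Module R M] : ℕ∞ :=
  sSup {x : ℕ∞ | ∃ rs : List R, (∀ r ∈ rs, r ∈ I) ∧
    RingTheory.Sequence.IsWeaklyRegular M rs ∧ x = rs.length}

/-- The grade of an ideal: the length of a maximal `R`-regular sequence in `I`. -/
noncomputable def gradeE (I : Ideal R) : ℕ∞ := depthE R I R

/-- A grade consistent function on `Spec R`. -/
def GradeConsistent (f : PrimeSpectrum R → ℕ) : Prop :=
  (∀ p : PrimeSpectrum R, (f p : ℕ∞) ≤ gradeE R p.asIdeal) ∧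
  (∀ p q : PrimeSpectrum R, p.asIdeal ≤ q.asIdeal → f p ≤ f q)

/-- The localization of a module at a prime, as a module over the local ring `R_p`. -/
noncomputable abbrev localizeM (p : PrimeSpectrum R) (M : ModuleCat.{u} R) :
    ModuleCat.{u} (Localization.AtPrime p.asIdeal) :=
  ModuleCat.of (Localization.AtPrime p.asIdeal) (LocalizedModule p.asIdeal.primeCompl M)

/-- `pd_{R_p} M_p`. -/
noncomputable def localPdim (p : PrimeSpectrum R) (M : ModuleCat.{u} R) : WithBot ℕ∞ :=
  pdim (Localization.AtPrime p.asIdeal) (localizeM R p M)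

/-- `depth_{R_p} M_p`. -/
noncomputable def localDepth (p : PrimeSpectrum R) (M : ModuleCat.{u} R) : ℕ∞ :=
  depthE (Localization.AtPrime p.asIdeal)
    (IsLocalRing.maximalIdeal (Localization.AtPrime p.asIdeal))
    (LocalizedModule p.asIdeal.primeCompl M)

/-- The height of a prime ideal. -/
noncomputable def heightE (p : PrimeSpectrum R) : ℕ∞ := Order.height p

/-- `PD(R)` : finitely generated modules of finite projective dimension. -/
def PDcat : Set (ModuleCat.{u} R) :=
  {M | Module.Finite R M ∧ ∃ n : ℕ, pdLE R n M}

/-- `MCM(R)` : maximal Cohen-Macaulay modules. -/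
def MCMcat : Set (ModuleCat.{u} R) :=
  {M | Module.Finite R M ∧ ∀ p : PrimeSpectrum R, heightE R p ≤ localDepth R p M}

/-- The nonfree locus of a module. -/
def NF (M : ModuleCat.{u} R) : Set (PrimeSpectrum R) :=
  {p | ¬ Module.Free (Localization.AtPrime p.asIdeal) (LocalizedModule p.asIdeal.primeCompl M)}

/-- The infinite projective dimension locus of a module. -/
def IPD (M : ModuleCat.{u} R) : Set (PrimeSpectrum R) :=
  {p | localPdim R p M = (⊤ : WithBot ℕ∞)}

/-- The infinite projective dimension locus of a collection of modules. -/
def IPDcat (𝒳 : Set (ModuleCat.{u} R)) : Set (PrimeSpectrum R) :=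
  ⋃ M ∈ 𝒳, IPD R M

/-- The modules in `mod R` whose infinite projective dimension locus lies in `W`. -/
def IPDinv (W : Set (PrimeSpectrum R)) : Set (ModuleCat.{u} R) :=
  {M | Module.Finite R M ∧ IPD R M ⊆ W}

/-- A specialization closed subset of `Spec R`. -/
def SpecClosed (W : Set (PrimeSpectrum R)) : Prop :=
  ∀ p ∈ W, ∀ q : PrimeSpectrum R, p.asIdeal ≤ q.asIdeal → q ∈ W

/-- Membership in `add 𝒳_p`: direct summands of localizations of finite direct sums
of members of `𝒳`. -/
def memAddLocal (𝒳 : Set (ModuleCat.{u} R)) (p : PrimeSpectrum R)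
    (N : ModuleCat.{u} (Localization.AtPrime p.asIdeal)) : Prop :=
  ∃ (n : ℕ) (X : Fin n → ModuleCat.{u} R), (∀ i, X i ∈ 𝒳) ∧
    ∃ (N' : ModuleCat.{u} (Localization.AtPrime p.asIdeal)),
      Nonempty ((↥N × ↥N') ≃ₗ[Localization.AtPrime p.asIdeal]
        ((i : Fin n) → LocalizedModule p.asIdeal.primeCompl (X i)))

/-- `K` is an `n`-th syzygy of `M` computed from a minimal free resolution over the
local ring `S`. -/
def IsMinSyz (S : Type u) [CommRing S] [IsLocalRing S] :
    ℕ → ModuleCat.{u} S → ModuleCat.{u} S → Prop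
  | 0, M, K => Nonempty (K ≃ₗ[S] M)
  | n+1, M, K => ∃ (F : ModuleCat.{u} S) (g : F →ₗ[S] M) (K' : ModuleCat.{u} S)
      (i : K' →ₗ[S] F),
      Module.Finite S F ∧ Module.Free S F ∧ Function.Surjective g ∧
      (LinearMap.ker g ≤ (IsLocalRing.maximalIdeal S) • (⊤ : Submodule S F)) ∧
      Function.Injective i ∧ LinearMap.range i = LinearMap.ker g ∧
      IsMinSyz S n K' K

/-- `K` is an `n`-th syzygy of `M` in some projective resolution (over any ring). -/
def IsSyz : ℕ → ModuleCat.{u} R → ModuleCat.{u} R → Prop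
  | 0, M, K => Nonempty (K ≃ₗ[R] M)
  | n+1, M, K => ∃ (F : ModuleCat.{u} R) (g : F →ₗ[R] M) (K' : ModuleCat.{u} R)
      (i : K' →ₗ[R] F),
      Module.Finite R F ∧ Module.Projective R F ∧ Function.Surjective g ∧
      Function.Injective i ∧ LinearMap.range i = LinearMap.ker g ∧
      IsSyz n K' K

/-- `T` is (isomorphic to) the Auslander transpose of `M`, computed from a minimal
free presentation over the local ring `S`. -/
def IsTranspose (S : Type u) [CommRing S] [IsLocalRing S] (M T : ModuleCat.{u} S) : Prop :=
  ∃ (F1 F0 : ModuleCat.{u} S) (d : F1 →ₗ[S] F0) (e : F0 →ₗ[S] M),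
    Module.Finite S F0 ∧ Module.Free S F0 ∧ Module.Finite S F1 ∧ Module.Free S F1 ∧
    Function.Surjective e ∧ LinearMap.range d = LinearMap.ker e ∧
    LinearMap.ker e ≤ (IsLocalRing.maximalIdeal S) • (⊤ : Submodule S F0) ∧
    LinearMap.ker d ≤ (IsLocalRing.maximalIdeal S) • (⊤ : Submodule S F1) ∧
    Nonempty (T ≃ₗ[S] ((Module.Dual S F1) ⧸ LinearMap.range d.dualMap))

/-- `T` is (isomorphic to) `Tr Ω^n M` over the local ring `S`. -/
def IsTrOmega (S : Type u) [CommRing S] [IsLocalRing S] (n : ℕ) (M T : ModuleCat.{u} S) :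
    Prop :=
  ∃ K : ModuleCat.{u} S, IsMinSyz S n M K ∧ IsTranspose S K T

/-- Resolving subcategory `𝒳` is dominant on `W ⊆ Spec R`. -/
def DominantOn (𝒳 : Set (ModuleCat.{u} R)) (W : Set (PrimeSpectrum R)) : Prop :=
  ∀ p ∈ W, ∃ (n : ℕ) (K : ModuleCat.{u} (Localization.AtPrime p.asIdeal)),
    IsMinSyz (Localization.AtPrime p.asIdeal) n
      (ModuleCat.of (Localization.AtPrime p.asIdeal)
        (IsLocalRing.ResidueField (Localization.AtPrime p.asIdeal))) K ∧
    memAddLocal R 𝒳 p K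

/-- Dominant resolving subcategory. -/
def Dominant (𝒳 : Set (ModuleCat.{u} R)) : Prop := DominantOn R 𝒳 Set.univ

/-- A (noetherian) local ring is Cohen-Macaulay if its depth equals its Krull dimension. -/
def IsCMLocalRing (S : Type u) [CommRing S] [IsLocalRing S] : Prop :=
  IsNoetherianRing S ∧
    ((depthE S (IsLocalRing.maximalIdeal S) S : WithBot ℕ∞) = ringKrullDim S)

/-- A regular local ring: a noetherian local ring whose maximal ideal is generated by
`dim S` elements. -/
def IsRegLocalRing (S : Type u) [CommRing S] [IsLocalRing S] : Prop :=
  IsNoetherianRing S ∧ ∃ s : Finset S,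
    Ideal.span (s : Set S) = IsLocalRing.maximalIdeal S ∧
    ringKrullDim S = (s.card : WithBot ℕ∞)

/-- The singular locus of `R`. -/
def SingLocus : Set (PrimeSpectrum R) :=
  {p | ¬ IsRegLocalRing (Localization.AtPrime p.asIdeal)}

/-- A hypersurface local ring: the completion is a quotient of a regular local ring by
one element. -/
def IsHypersurfaceLocalRing (S : Type u) [CommRing S] [IsLocalRing S] : Prop :=
  ∃ (T : Type u) (_ : CommRing T) (_ : IsLocalRing T) (f : T),
    IsRegLocalRing T ∧
    Nonempty ((AdicCompletion (IsLocalRing.maximalIdeal S) S) ≃+* (T ⧸ Ideal.span {f}))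

/-- A complete intersection local ring: the completion is a quotient of a regular local
ring by a regular sequence. -/
def IsCompleteIntersectionLocalRing (S : Type u) [CommRing S] [IsLocalRing S] : Prop :=
  ∃ (T : Type u) (_ : CommRing T) (_ : IsLocalRing T) (rs : List T),
    IsRegLocalRing T ∧ RingTheory.Sequence.IsRegular T rs ∧
    Nonempty ((AdicCompletion (IsLocalRing.maximalIdeal S) S) ≃+*
      (T ⧸ Ideal.ofList rs))

/-- The subquotient `A / (A ⊓ B)` of two submodules, used for homology. -/
def subquot {S M : Type u} [CommRing S] [AddCommGroup M] [Module S M]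
    (A B : Submodule S M) : Type u :=
  A ⧸ (B.comap A.subtype)

noncomputable instance {S M : Type u} [CommRing S] [AddCommGroup M] [Module S M]
    (A B : Submodule S M) : AddCommGroup (subquot A B) :=
  inferInstanceAs (AddCommGroup (A ⧸ (B.comap A.subtype)))

noncomputable instance {S M : Type u} [CommRing S] [AddCommGroup M] [Module S M]
    (A B : Submodule S M) : Module S (subquot A B) :=
  inferInstanceAs (Module S (A ⧸ (B.comap A.subtype)))

/-- `E` is (isomorphic to) `Ext^{j+1}_S(M, S)`, computed from a finite free resolution. -/
def IsExtPos (S : Type u) [CommRing S] (j : ℕ) (M E : ModuleCat.{u} S) : Prop :=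
  ∃ (F : ℕ → ModuleCat.{u} S) (d : ∀ i : ℕ, (F (i+1) : Type u) →ₗ[S] F i)
    (e : (F 0 : Type u) →ₗ[S] M),
    (∀ i, Module.Finite S (F i)) ∧ (∀ i, Module.Free S (F i)) ∧
    Function.Surjective e ∧ LinearMap.range (d 0) = LinearMap.ker e ∧
    (∀ i, LinearMap.range (d (i+1)) = LinearMap.ker (d i)) ∧
    Nonempty (E ≃ₗ[S]
      subquot (LinearMap.ker ((d (j+1)).dualMap)) (LinearMap.range ((d j).dualMap)))

/-- `T` is (isomorphic to) `Tor_n^S(M, N)`, computed from a projective resolution of `M`. -/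
def IsTor (S : Type u) [CommRing S] (n : ℕ) (M N T : ModuleCat.{u} S) : Prop :=
  ∃ (F : ℕ → ModuleCat.{u} S) (d : ∀ i : ℕ, (F (i+1) : Type u) →ₗ[S] F i)
    (e : (F 0 : Type u) →ₗ[S] M),
    (∀ i, Module.Projective S (F i)) ∧
    Function.Surjective e ∧ LinearMap.range (d 0) = LinearMap.ker e ∧
    (∀ i, LinearMap.range (d (i+1)) = LinearMap.ker (d i)) ∧
    (match n with
      | 0 => Nonempty (T ≃ₗ[S] TensorProduct S M N)
      | (j+1) => Nonempty (T ≃ₗ[S]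
          subquot (LinearMap.ker (LinearMap.rTensor (↥N) (d j)))
            (LinearMap.range (LinearMap.rTensor (↥N) (d (j+1))))))

/-- `idLE n M` : the injective dimension of `M` is at most `n`. -/
def idLE (S : Type u) [CommRing S] : ℕ → ModuleCat.{u} S → Prop
  | 0, M => Module.Injective S M
  | n+1, M => ∃ (I C : ModuleCat.{u} S) (f : M →ₗ[S] I) (g : I →ₗ[S] C),
      IsSES f g ∧ Module.Injective S I ∧ idLE S n C

/-- `PD_0^n(R)` over a local ring: modules of projective dimension at most `n` that are
free on the punctured spectrum. -/
def PD0n [IsLocalRing R] (n : ℕ) : Set (ModuleCat.{u} R) :=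
  {M | Module.Finite R M ∧ pdLE R n M ∧
    ∀ p : PrimeSpectrum R, p.asIdeal ≠ IsLocalRing.maximalIdeal R →
      Module.Free (Localization.AtPrime p.asIdeal) (LocalizedModule p.asIdeal.primeCompl M)}

/-- `PD_0(R)` over a local ring: modules of finite projective dimension that are
free on the punctured spectrum. -/
def PD0 [IsLocalRing R] : Set (ModuleCat.{u} R) :=
  {M | Module.Finite R M ∧ (∃ n : ℕ, pdLE R n M) ∧
    ∀ p : PrimeSpectrum R, p.asIdeal ≠ IsLocalRing.maximalIdeal R →
      Module.Free (Localization.AtPrime p.asIdeal) (LocalizedModule p.asIdeal.primeCompl M)}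

/-- The residue field of a local ring, as a bundled module. -/
noncomputable abbrev residueMod (S : Type u) [CommRing S] [IsLocalRing S] : ModuleCat.{u} S :=
  ModuleCat.of S (IsLocalRing.ResidueField S)


section Helpers

variable {R}

/-- Lifting against a map through its range. -/
lemma exists_lift_of_range_le {A B F : Type u} [AddCommGroup A] [Module R A]
    [AddCommGroup B] [Module R B] [AddCommGroup F] [Module R F] [Module.Projective R F]
    (d : A →ₗ[R] B) (w : F →ₗ[R] B) (h : ∀ x, w x ∈ LinearMap.range d) :
    ∃ v : F →ₗ[R] A, d ∘ₗ v = w := by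
  obtain ⟨v, hv⟩ := Module.projective_lifting_property d.rangeRestrict
    (w.codRestrict (LinearMap.range d) h) d.surjective_rangeRestrict
  refine ⟨v, LinearMap.ext fun x => ?_⟩
  have := congrArg Subtype.val (LinearMap.congr_fun hv x)
  simpa using this

lemma exists_fin_range [IsNoetherianRing R] {a : ℕ} (K : Submodule R (Fin a → R)) :
    ∃ (c : ℕ) (g : (Fin c → R) →ₗ[R] (Fin a → R)), LinearMap.range g = K := by
  obtain ⟨c, g, hg⟩ := Module.Finite.exists_fin' R K
  refine ⟨c, K.subtype ∘ₗ g, ?_⟩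
  rw [LinearMap.range_comp, LinearMap.range_eq_top.2 hg, Submodule.map_top, Submodule.range_subtype]

/-- A free resolution of `R^a / K`. -/
lemma exists_resolution [IsNoetherianRing R] {a : ℕ} (K : Submodule R (Fin a → R)) :
    ∃ (m : ℕ → ℕ) (d : ∀ i, (Fin (m (i+1)) → R) →ₗ[R] (Fin (m i) → R)) (h0 : m 0 = a),
      (∀ v : Fin (m 0) → R, v ∈ LinearMap.range (d 0) ↔ (fun j => v (Fin.cast h0.symm j)) ∈ K) ∧
      ∀ i, LinearMap.range (d (i+1)) = LinearMap.ker (d i) := by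
  obtain ⟨c0, g0, hg0⟩ := exists_fin_range K
  let St := Σ (b c : ℕ), ((Fin c → R) →ₗ[R] (Fin b → R))
  have step : ∀ s : St, ∃ (c : ℕ) (g : (Fin c → R) →ₗ[R] (Fin s.2.1 → R)),
      LinearMap.range g = LinearMap.ker s.2.2 := fun s => exists_fin_range _
  choose nc ng hng using step
  let seq : ℕ → St := fun n => Nat.rec ⟨a, c0, g0⟩ (fun _ s => ⟨s.2.1, nc s, ng s⟩) n
  refine ⟨fun i => (seq i).1, fun i => (seq i).2.2, rfl, ?_, fun i => hng (seq i)⟩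
  intro v
  rw [← hg0]
  rfl

/-- Homotopies for multiplication by an element annihilating the resolved module. -/
lemma exists_homotopy (m : ℕ → ℕ) (d : ∀ i, (Fin (m (i+1)) → R) →ₗ[R] (Fin (m i) → R))
    (hd : ∀ i, LinearMap.range (d (i+1)) = LinearMap.ker (d i))
    (s : R) (hs : ∀ v, s • v ∈ LinearMap.range (d 0)) :
    (∃ h0 : (Fin (m 0) → R) →ₗ[R] (Fin (m 1) → R), ∀ v, d 0 (h0 v) = s • v) ∧
    ∀ i, ∃ (h : (Fin (m i) → R) →ₗ[R] (Fin (m (i+1)) → R))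
      (h' : (Fin (m (i+1)) → R) →ₗ[R] (Fin (m (i+2)) → R)),
      ∀ v, d (i+1) (h' v) + h (d i v) = s • v := by
  have hdd : ∀ i v, d i (d (i+1) v) = 0 := fun i v => by
    have : d (i+1) v ∈ LinearMap.ker (d i) := by rw [← hd]; exact ⟨v, rfl⟩
    exact this
  obtain ⟨h0, hh0⟩ := exists_lift_of_range_le (d 0) (s • LinearMap.id) (fun x => hs x)
  have hh0' : ∀ v, d 0 (h0 v) = s • v := fun v => LinearMap.congr_fun hh0 v
  refine ⟨⟨h0, hh0'⟩, fun i => ?_⟩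
  induction i with
  | zero =>
    obtain ⟨h1, hh1⟩ := exists_lift_of_range_le (d 1) (s • LinearMap.id - h0 ∘ₗ d 0)
      (fun x => by rw [hd]; simp [hh0'])
    refine ⟨h0, h1, fun v => ?_⟩
    have := LinearMap.congr_fun hh1 v
    simp only [LinearMap.comp_apply, LinearMap.sub_apply, LinearMap.smul_apply,
      LinearMap.id_apply] at this
    rw [this]; simp
  | succ i ih =>
    obtain ⟨h, h', hh⟩ := ih
    obtain ⟨h2, hh2⟩ := exists_lift_of_range_le (d (i+2)) (s • LinearMap.id - h' ∘ₗ d (i+1))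
      (fun x => by
        rw [hd, LinearMap.mem_ker]
        have := hh (d (i+1) x)
        rw [hdd, map_zero, add_zero] at this
        simp [this])
    refine ⟨h', h2, fun v => ?_⟩
    have := LinearMap.congr_fun hh2 v
    simp only [LinearMap.comp_apply, LinearMap.sub_apply, LinearMap.smul_apply,
      LinearMap.id_apply] at this
    rw [this]; simp

/-- Vanishing of the low degree cohomology of `Hom(F, N)`. -/
lemma dual_exact (m : ℕ → ℕ) (d : ∀ i, (Fin (m (i+1)) → R) →ₗ[R] (Fin (m i) → R))
    (hd : ∀ i, LinearMap.range (d (i+1)) = LinearMap.ker (d i))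
    (rs : List R) : ∀ (N : Type u) [AddCommGroup N] [Module R N],
    (∀ s ∈ rs, ∀ v, s • v ∈ LinearMap.range (d 0)) →
    RingTheory.Sequence.IsWeaklyRegular N rs →
    (0 < rs.length → ∀ φ : (Fin (m 0) → R) →ₗ[R] N, φ ∘ₗ d 0 = 0 → φ = 0) ∧
    (∀ i, i + 1 < rs.length → ∀ φ : (Fin (m (i+1)) → R) →ₗ[R] N, φ ∘ₗ d (i+1) = 0 →
      ∃ ψ : (Fin (m i) → R) →ₗ[R] N, ψ ∘ₗ d i = φ) := by
  have hdd : ∀ i v, d i (d (i+1) v) = 0 := fun i v => by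
    have : d (i+1) v ∈ LinearMap.ker (d i) := by rw [← hd]; exact ⟨v, rfl⟩
    exact this
  induction rs with
  | nil => intro N _ _ _ _; simp
  | cons x rs ih =>
    intro N _ _ hs hreg
    rw [RingTheory.Sequence.isWeaklyRegular_cons_iff] at hreg
    obtain ⟨hx, hreg⟩ := hreg
    obtain ⟨⟨h0, hh0⟩, hh⟩ := exists_homotopy m d hd x (hs x (by simp))
    obtain ⟨ih0, ih1⟩ := ih (QuotSMulTop x N) (fun s hs' => hs s (by simp [hs'])) hreg
    let π : N →ₗ[R] QuotSMulTop x N := Submodule.mkQ _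
    have hπs : Function.Surjective π := Submodule.mkQ_surjective _
    have hπ : ∀ n, π n = 0 → n ∈ LinearMap.range (x • (LinearMap.id : N →ₗ[R] N)) := by
      intro n hn
      rw [Submodule.mkQ_apply, Submodule.Quotient.mk_eq_zero,
        Submodule.mem_smul_pointwise_iff_exists] at hn
      obtain ⟨b, -, hb⟩ := hn
      exact ⟨b, hb⟩
    refine ⟨fun _ φ hφ => ?_, fun i hi φ hφ => ?_⟩
    · ext1 j
      ext1
      apply hx
      have := LinearMap.congr_fun hφ (h0 (LinearMap.single R (fun _ => R) j 1))
      simp only [LinearMap.comp_apply, hh0, map_smul] at this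
      simpa using this
    · obtain ⟨h, h', hhh⟩ := hh i
      have key : ∀ (χ : (Fin (m i) → R) →ₗ[R] N), (∀ v, χ (d i v) = 0) →
          (∀ v, π (φ (h v)) = π (χ v)) → ∃ ψ : (Fin (m i) → R) →ₗ[R] N, ψ ∘ₗ d i = φ := by
        intro χ hχ hχ2
        obtain ⟨ψ, hψ⟩ := exists_lift_of_range_le (x • (LinearMap.id : N →ₗ[R] N)) (φ ∘ₗ h - χ)
          (fun v => hπ _ (by simp [hχ2]))
        refine ⟨ψ, LinearMap.ext fun v => ?_⟩
        apply hx
        have h1 := LinearMap.congr_fun hψ (d i v)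
        simp only [LinearMap.comp_apply, LinearMap.sub_apply, LinearMap.smul_apply,
          LinearMap.id_apply, hχ, sub_zero] at h1
        have h2 := congrArg φ (hhh v)
        have h3 : φ (d (i+1) (h' v)) = 0 := LinearMap.congr_fun hφ (h' v)
        rw [map_add, h3, zero_add, map_smul] at h2
        simp only [LinearMap.comp_apply]
        rw [h1, h2]
      have hcoc : (π ∘ₗ φ ∘ₗ h) ∘ₗ d i = 0 := by
        ext1 j
        ext1
        simp only [LinearMap.comp_apply, LinearMap.zero_apply]
        generalize (LinearMap.single R (fun _ => R) j 1 : Fin (m (i+1)) → R) = v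
        have h2 := congrArg φ (hhh v)
        have h3 : φ (d (i+1) (h' v)) = 0 := LinearMap.congr_fun hφ (h' v)
        rw [map_add, h3, zero_add, map_smul] at h2
        rw [h2, Submodule.mkQ_apply, Submodule.Quotient.mk_eq_zero]
        exact Submodule.smul_mem_pointwise_smul _ _ _ trivial
      cases i with
      | zero =>
        have h4 := ih0 (by simpa using hi) _ hcoc
        exact key 0 (by simp) (fun v => by simpa using LinearMap.congr_fun h4 v)
      | succ i =>
        obtain ⟨χ, hχ⟩ := ih1 i (by simpa using hi) _ hcoc
        obtain ⟨χ', hχ'⟩ := Module.projective_lifting_property π χ hπs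
        refine key (χ' ∘ₗ d i) (fun v => by simp [hdd]) (fun v => ?_)
        have h5 := LinearMap.congr_fun hχ v
        have h6 := LinearMap.congr_fun hχ' (d i v)
        simp only [LinearMap.comp_apply] at h5 h6 ⊢
        rw [h6, h5]

lemma IsSES.exact {A B C : Type u} [AddCommGroup A] [Module R A]
    [AddCommGroup B] [Module R B] [AddCommGroup C] [Module R C]
    {f : A →ₗ[R] B} {g : B →ₗ[R] C} (h : IsSES f g) : Function.Exact f g :=
  LinearMap.exact_iff.2 h.2.2.symm

lemma IsSES.localized {A B C : Type u} [AddCommGroup A] [Module R A]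
    [AddCommGroup B] [Module R B] [AddCommGroup C] [Module R C]
    {f : A →ₗ[R] B} {g : B →ₗ[R] C} (h : IsSES f g) (S : Submonoid R) :
    IsSES (LocalizedModule.map S f) (LocalizedModule.map S g) := by
  refine ⟨LocalizedModule.map_injective S f h.1, LocalizedModule.map_surjective S g h.2.1, ?_⟩
  have e : Function.Exact (LocalizedModule.map S f) (LocalizedModule.map S g) :=
    LocalizedModule.map_exact S f g h.exact
  exact (LinearMap.exact_iff.1 e).symm

lemma IsSES.shortExact {A B C : Type u} [AddCommGroup A] [Module R A]
    [AddCommGroup B] [Module R B] [AddCommGroup C] [Module R C]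
    {f : A →ₗ[R] B} {g : B →ₗ[R] C} (h : IsSES f g) :
    (ShortComplex.mk (ModuleCat.ofHom f) (ModuleCat.ofHom g)
      (by ext x; exact (h.exact (f x)).2 ⟨x, rfl⟩)).ShortExact := by
  have e : (ShortComplex.mk (ModuleCat.ofHom f) (ModuleCat.ofHom g)
      (by ext x; exact (h.exact (f x)).2 ⟨x, rfl⟩)).Exact :=
    (ShortComplex.ShortExact.moduleCat_exact_iff_function_exact _).2 h.exact
  exact { exact := e
          mono_f := (ModuleCat.mono_iff_injective _).2 h.1
          epi_g := (ModuleCat.epi_iff_surjective _).2 h.2.1 }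

lemma pdLE_localized (S : Submonoid R) (n : ℕ) : ∀ (M : ModuleCat.{u} R), pdLE R n M →
    pdLE (Localization S) n (ModuleCat.of (Localization S) (LocalizedModule S M)) := by
  induction n with
  | zero =>
    intro M h
    have : Module.Projective R M := h
    exact (inferInstance : Module.Projective (Localization S) (LocalizedModule S M))
  | succ n ih =>
    rintro M ⟨K, P, f, g, hP, hP', hses, hK⟩
    refine ⟨ModuleCat.of _ (LocalizedModule S K), ModuleCat.of _ (LocalizedModule S P),
      LocalizedModule.map S f, LocalizedModule.map S g, ?_, ?_, hses.localized S, ih K hK⟩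
    · exact Module.Finite.of_isLocalizedModule S (LocalizedModule.mkLinearMap S P)
    · exact (inferInstance : Module.Projective (Localization S) (LocalizedModule S P))

lemma pdLE_hasPD (n : ℕ) : ∀ (M : ModuleCat.{u} R), pdLE R n M →
    HasProjectiveDimensionLT M (n + 1) := by
  induction n with
  | zero =>
    intro M h
    have : Module.Projective R M := h
    have : Projective M := (IsProjective.iff_projective M).1 this
    infer_instance
  | succ n ih =>
    rintro M ⟨K, P, f, g, hP, hP', hses, hK⟩
    have : Projective P := (IsProjective.iff_projective P).1 hP'
    exact (hses.shortExact.hasProjectiveDimensionLT_X₃_iff n this).2 (ih K hK)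

lemma pdim_le {M : ModuleCat.{u} R} {n : ℕ} (h : pdLE R n M) :
    pdim R M ≤ ((n : ℕ∞) : WithBot ℕ∞) :=
  sInf_le (Or.inr ⟨n, rfl, h⟩)

lemma le_pdim {M : ModuleCat.{u} R} {n : ℕ} (h0 : ¬ Subsingleton M)
    (h : ∀ k, pdLE R k M → n ≤ k) : ((n : ℕ∞) : WithBot ℕ∞) ≤ pdim R M := by
  refine le_sInf ?_
  rintro x (⟨-, hx⟩ | ⟨k, rfl, hk⟩)
  · exact absurd hx h0
  · exact_mod_cast h k hk

/-- The modules `E_0 = F_0^*`, `E_{i+1} = coker (F_i^* → F_{i+1}^*)`. -/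
noncomputable def trMod (m : ℕ → ℕ) (d : ∀ i, (Fin (m (i+1)) → R) →ₗ[R] (Fin (m i) → R)) :
    ℕ → ModuleCat.{u} R
  | 0 => ModuleCat.of R (Module.Dual R (Fin (m 0) → R))
  | i+1 => ModuleCat.of R (Module.Dual R (Fin (m (i+1)) → R) ⧸ LinearMap.range (d i).dualMap)

lemma trMod_ses (m : ℕ → ℕ) (d : ∀ i, (Fin (m (i+1)) → R) →ₗ[R] (Fin (m i) → R))
    (hd : ∀ i, LinearMap.range (d (i+1)) = LinearMap.ker (d i)) (n : ℕ)
    (H0 : 0 < n → ∀ φ : (Fin (m 0) → R) →ₗ[R] R, φ ∘ₗ d 0 = 0 → φ = 0)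
    (H : ∀ i, i + 1 < n → ∀ φ : (Fin (m (i+1)) → R) →ₗ[R] R, φ ∘ₗ d (i+1) = 0 →
      ∃ ψ : (Fin (m i) → R) →ₗ[R] R, ψ ∘ₗ d i = φ) (i : ℕ) (hi : i < n) :
    ∃ (j : trMod m d i →ₗ[R] Module.Dual R (Fin (m (i+1)) → R)),
      IsSES j (show Module.Dual R (Fin (m (i+1)) → R) →ₗ[R] trMod m d (i+1) from
        Submodule.mkQ (LinearMap.range (d i).dualMap)) := by
  have hdd : ∀ i v, d i (d (i+1) v) = 0 := fun i v => by
    have : d (i+1) v ∈ LinearMap.ker (d i) := by rw [← hd]; exact ⟨v, rfl⟩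
    exact this
  cases i with
  | zero =>
    have hinj : Function.Injective (d 0).dualMap := by
      rw [← LinearMap.ker_eq_bot, LinearMap.ker_eq_bot']
      intro φ hφ
      exact H0 hi φ hφ
    exact ⟨(d 0).dualMap, hinj, Submodule.mkQ_surjective _, (Submodule.ker_mkQ _).symm⟩
  | succ i =>
    have hle : LinearMap.range (d i).dualMap ≤ LinearMap.ker (d (i+1)).dualMap := by
      rintro _ ⟨φ, rfl⟩
      rw [LinearMap.mem_ker]
      refine LinearMap.ext fun v => ?_
      simp [LinearMap.dualMap_apply, hdd]
    have hinj : Function.Injective (Submodule.liftQ _ (d (i+1)).dualMap hle) := by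
      rw [← LinearMap.ker_eq_bot]
      apply Submodule.ker_liftQ_eq_bot
      intro φ hφ
      obtain ⟨ψ, hψ⟩ := H i hi φ hφ
      exact ⟨ψ, hψ⟩
    exact ⟨Submodule.liftQ _ (d (i+1)).dualMap hle, hinj, Submodule.mkQ_surjective _,
      (Submodule.range_liftQ _ _ _).trans (Submodule.ker_mkQ _).symm⟩

lemma trMod_finite (m : ℕ → ℕ) (d : ∀ i, (Fin (m (i+1)) → R) →ₗ[R] (Fin (m i) → R)) (i : ℕ) :
    Module.Finite R (trMod m d i) := by
  cases i with
  | zero => exact (inferInstance : Module.Finite R (Module.Dual R (Fin (m 0) → R)))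
  | succ i => exact Module.Finite.quotient R (LinearMap.range (d i).dualMap)

lemma trMod_proj (m : ℕ → ℕ) (d : ∀ i, (Fin (m (i+1)) → R) →ₗ[R] (Fin (m i) → R))
    (hd : ∀ i, LinearMap.range (d (i+1)) = LinearMap.ker (d i)) (k : ℕ)
    (S : Submonoid R) (s : R) (hsS : s ∈ S) (hs : ∀ v, s • v ∈ LinearMap.range (d 0)) :
    Module.Projective (Localization S) (LocalizedModule S (trMod m d (k+1))) := by
  have hdd : ∀ i v, d i (d (i+1) v) = 0 := fun i v => by
    have : d (i+1) v ∈ LinearMap.ker (d i) := by rw [← hd]; exact ⟨v, rfl⟩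
    exact this
  obtain ⟨h, h', hh⟩ := (exists_homotopy m d hd s hs).2 k
  have hle : LinearMap.range (d k).dualMap ≤ LinearMap.ker (d (k+1)).dualMap := by
    rintro _ ⟨φ, rfl⟩
    rw [LinearMap.mem_ker]
    refine LinearMap.ext fun v => ?_
    simp [LinearMap.dualMap_apply, hdd]
  let α : trMod m d (k+1) →ₗ[R] Module.Dual R (Fin (m (k+2)) → R) :=
    Submodule.liftQ _ (d (k+1)).dualMap hle
  let β : Module.Dual R (Fin (m (k+2)) → R) →ₗ[R] trMod m d (k+1) :=
    Submodule.mkQ (LinearMap.range (d k).dualMap) ∘ₗ h'.dualMap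
  have hβα : ∀ x, β (α x) = s • x := by
    intro x
    obtain ⟨φ, rfl⟩ := Submodule.mkQ_surjective (LinearMap.range (d k).dualMap) x
    change Submodule.mkQ (LinearMap.range (d k).dualMap) (h'.dualMap ((d (k+1)).dualMap φ)) =
      s • Submodule.mkQ (LinearMap.range (d k).dualMap) φ
    rw [← map_smul, Submodule.mkQ_apply, Submodule.mkQ_apply, Submodule.Quotient.eq]
    refine ⟨- h.dualMap φ, LinearMap.ext fun v => ?_⟩
    have := congrArg φ (hh v)
    simp only [map_add, map_smul] at this
    simp only [LinearMap.dualMap_apply, LinearMap.neg_apply, LinearMap.sub_apply,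
      LinearMap.smul_apply, map_neg]
    rw [← this]; ring
  let u : Localization S := Localization.mk 1 ⟨s, hsS⟩
  refine Module.Projective.of_split (M := LocalizedModule S (Module.Dual R (Fin (m (k+2)) → R)))
    (LocalizedModule.map S α) (u • LocalizedModule.map S β) ?_
  refine LinearMap.ext fun x => ?_
  induction x using LocalizedModule.induction_on with
  | h x t =>
    simp only [LinearMap.comp_apply, LinearMap.smul_apply, LocalizedModule.map_mk, hβα,
      LinearMap.id_apply]
    rw [LocalizedModule.mk_smul_mk, one_smul]
    exact LocalizedModule.mk_cancel_common_left (⟨s, hsS⟩ : S) t x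

lemma subsingleton_of_le_smul {A N : Type*} [CommRing A] [IsLocalRing A] [AddCommGroup N]
    [Module A N] [hfin : Module.Finite A N]
    (h : ∀ x : N, x ∈ IsLocalRing.maximalIdeal A • (⊤ : Submodule A N)) : ∀ x : N, x = 0 := by
  have hbot := Submodule.eq_bot_of_le_smul_of_le_jacobson_bot (IsLocalRing.maximalIdeal A)
    (⊤ : Submodule A N) hfin.fg_top (fun x _ => h x) (IsLocalRing.maximalIdeal_le_jacobson _)
  intro x
  have : x ∈ (⊤ : Submodule A N) := Submodule.mem_top
  rw [hbot] at this
  exact this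

lemma trMod_not_pd [IsNoetherianRing R] (p : PrimeSpectrum R) (m : ℕ → ℕ)
    (d : ∀ i, (Fin (m (i+1)) → R) →ₗ[R] (Fin (m i) → R)) (hm : 0 < m 0)
    (hp : ∀ v j, d 0 v j ∈ p.asIdeal)
    (k : ℕ)
    (H : ∀ i, i < k + 1 → ∃ (j : trMod m d i →ₗ[R] Module.Dual R (Fin (m (i+1)) → R)),
      IsSES j (show Module.Dual R (Fin (m (i+1)) → R) →ₗ[R] trMod m d (i+1) from
        Submodule.mkQ (LinearMap.range (d i).dualMap)))
    (H0 : Function.Injective (d 0).dualMap) :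
    ¬ HasProjectiveDimensionLT (localizeM R p (trMod m d (k+1))) (k + 1) := by
  induction k with
  | succ k ih =>
    intro h
    refine ih (fun i hi => H i (by omega)) ?_
    obtain ⟨j, hj⟩ := H (k+1) (by omega)
    have hs := (hj.localized p.asIdeal.primeCompl).shortExact
    refine (hs.hasProjectiveDimensionLT_X₃_iff k ?_).1 h
    exact (IsProjective.iff_projective _).1 (inferInstance : Module.Projective
      (Localization p.asIdeal.primeCompl)
      (LocalizedModule p.asIdeal.primeCompl (Module.Dual R (Fin (m (k+2)) → R))))
  | zero =>
    intro h
    let S := p.asIdeal.primeCompl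
    let D0 := Module.Dual R (Fin (m 0) → R)
    let D1 := Module.Dual R (Fin (m 1) → R)
    have hses : IsSES (A := D0) (B := D1) (C := D1 ⧸ LinearMap.range (d 0).dualMap)
        (d 0).dualMap (Submodule.mkQ (LinearMap.range (d 0).dualMap)) :=
      ⟨H0, Submodule.mkQ_surjective _, (Submodule.ker_mkQ _).symm⟩
    have hl := hses.localized S
    have hproj : Module.Projective (Localization S)
        (LocalizedModule S (D1 ⧸ LinearMap.range (d 0).dualMap)) :=
      (IsProjective.iff_projective _).2
        (projective_iff_hasProjectiveDimensionLT_one.2 h)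
    obtain ⟨σ, hσ⟩ := Module.projective_lifting_property
      (LocalizedModule.map S (Submodule.mkQ (LinearMap.range (d 0).dualMap))) LinearMap.id hl.2.1
    obtain ⟨r, hr⟩ : ∃ r : LocalizedModule S D1 →ₗ[Localization S] LocalizedModule S D0,
        r ∘ₗ LocalizedModule.map S (d 0).dualMap = LinearMap.id :=
      ((Function.Exact.split_tfae' hl.exact).out 0 1 rfl rfl).1 ⟨hl.1, σ, hσ⟩ |>.2
    have hfin : Module.Finite (Localization.AtPrime p.asIdeal) (LocalizedModule S D0) :=
      Module.Finite.of_isLocalizedModule S (LocalizedModule.mkLinearMap S D0)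
    have htop : ∀ x : LocalizedModule S D0, x = 0 := by
      refine subsingleton_of_le_smul (A := Localization.AtPrime p.asIdeal)
        (N := LocalizedModule S D0) fun x => ?_
      induction x using LocalizedModule.induction_on with
      | h φ t =>
        have h1 := LinearMap.congr_fun hr (LocalizedModule.mk φ t)
        simp only [LinearMap.comp_apply, LocalizedModule.map_mk, LinearMap.id_apply] at h1
        rw [← h1]
        have h2 : (d 0).dualMap φ = ∑ j, φ (d 0 (Pi.single j 1)) •
            (LinearMap.proj j : (Fin (m 1) → R) →ₗ[R] R) := by
          ext j
          simp [LinearMap.dualMap_apply, Pi.single_apply]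
        have h3 : ∀ v, φ (d 0 v) ∈ p.asIdeal := by
          intro v
          rw [pi_eq_sum_univ (d 0 v), map_sum]
          refine Ideal.sum_mem _ fun j _ => ?_
          rw [map_smul, smul_eq_mul]
          exact Ideal.mul_mem_right _ _ (hp v j)
        have h4 : ∀ ψ : D1, r (LocalizedModule.mk ψ t) =
            (Localization.mk 1 t : Localization S) • r (LocalizedModule.mkLinearMap S D1 ψ) := by
          intro ψ
          rw [← map_smul, LocalizedModule.mkLinearMap_apply, LocalizedModule.mk_smul_mk, one_smul,
            mul_one]
        rw [h4, h2, map_sum, map_sum]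
        refine Submodule.smul_mem _ _ (Submodule.sum_mem _ fun j _ => ?_)
        have h7 : ∀ (a : R) (ψ : D1), r (LocalizedModule.mkLinearMap S D1 (a • ψ)) =
            algebraMap R (Localization S) a • r (LocalizedModule.mkLinearMap S D1 ψ) := by
          intro a ψ
          rw [← map_smul r, map_smul, algebraMap_smul]
        rw [h7]
        refine Submodule.smul_mem_smul ?_ Submodule.mem_top
        rw [← IsLocalization.AtPrime.map_eq_maximalIdeal p.asIdeal (Localization.AtPrime p.asIdeal)]
        exact Ideal.mem_map_of_mem _ (h3 _)
    let e : D0 := LinearMap.proj ⟨0, hm⟩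
    have he : LocalizedModule.mk e (1 : S) = 0 := htop _
    rw [← LocalizedModule.zero_mk (1 : S), LocalizedModule.mk_eq] at he
    obtain ⟨c, hc⟩ := he
    have h5 := LinearMap.congr_fun hc (Pi.single ⟨0, hm⟩ 1)
    simp only [one_smul, smul_zero] at h5
    apply c.2
    have h6 : (c : R) = 0 := by
      have h8 : (c : R) * (Pi.single (M := fun _ => R) (⟨0, hm⟩ : Fin (m 0)) (1 : R)) ⟨0, hm⟩ = 0 := h5
      simpa using h8
    rw [h6]
    exact p.asIdeal.zero_mem

end Helpers

/-- Lemma 5.4: for a grade consistent function `f` and a prime `p` there is a module `E`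
of finite projective dimension with `pd E_q ≤ f(q)` for all `q` and `pd E_p = f(p)`. -/
theorem exists_module_realizing_grade_consistent [IsNoetherianRing R]
    (f : PrimeSpectrum R → ℕ) (hf : GradeConsistent R f) (p : PrimeSpectrum R) :
    ∃ E : ModuleCat.{u} R, Module.Finite R E ∧
      pdim R E ≠ (⊤ : WithBot ℕ∞) ∧
      (∀ q : PrimeSpectrum R, localPdim R q E ≤ ((f q : ℕ∞) : WithBot ℕ∞)) ∧
      localPdim R p E = ((f p : ℕ∞) : WithBot ℕ∞) := by
  obtain ⟨hgr, hmono⟩ := hf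
  rcases hn : f p with _ | k
  · -- the case `f p = 0`
    have hproj : ∀ q : PrimeSpectrum R, pdLE (Localization.AtPrime q.asIdeal) 0
        (localizeM R q (ModuleCat.of R R)) := fun q =>
      pdLE_localized _ 0 (ModuleCat.of R R) (inferInstance : Module.Projective R R)
    refine ⟨ModuleCat.of R R, (inferInstance : Module.Finite R R), ?_, fun q => ?_, ?_⟩
    · have h : pdim R (ModuleCat.of R R) ≤ ((0 : ℕ) : ℕ∞) :=
        pdim_le (inferInstance : Module.Projective R R)
      intro h'
      rw [h'] at h
      exact absurd h (by decide)
    · exact (pdim_le (hproj q)).trans (by exact_mod_cast Nat.zero_le _)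
    · refine le_antisymm (pdim_le (hproj p)) (le_pdim ?_ fun k _ => Nat.zero_le k)
      intro hsub
      have hsub' : Subsingleton (LocalizedModule p.asIdeal.primeCompl R) := hsub
      have := Subsingleton.elim (LocalizedModule.mk (1 : R) (1 : p.asIdeal.primeCompl)) 0
      rw [← LocalizedModule.zero_mk (1 : p.asIdeal.primeCompl), LocalizedModule.mk_eq] at this
      obtain ⟨c, hc⟩ := this
      apply c.2
      have h6 : (c : R) = 0 := by simpa [Submonoid.smul_def] using hc
      rw [h6]
      exact p.asIdeal.zero_mem
  · -- the case `f p = k + 1`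
    obtain ⟨rs, hrs, hreg, hlen⟩ : ∃ rs : List R, (∀ r ∈ rs, r ∈ p.asIdeal) ∧
        RingTheory.Sequence.IsWeaklyRegular R rs ∧ k < rs.length := by
      have h1 : ((k : ℕ) : ℕ∞) < gradeE R p.asIdeal := by
        refine lt_of_lt_of_le ?_ (hgr p)
        rw [hn]
        exact_mod_cast Nat.lt_succ_self k
      obtain ⟨x, ⟨rs, h2, h3, rfl⟩, h4⟩ := lt_sSup_iff.1 h1
      exact ⟨rs, h2, h3, by exact_mod_cast h4⟩
    let K : Submodule R (Fin 1 → R) := Submodule.comap (LinearMap.proj 0 : (Fin 1 → R) →ₗ[R] R) p.asIdeal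
    obtain ⟨m, d, hm0, hd0, hd⟩ := exists_resolution K
    have hm : 0 < m 0 := by omega
    have hsmul : ∀ s ∈ p.asIdeal, ∀ v, s • v ∈ LinearMap.range (d 0) := by
      intro s hs v
      rw [hd0]
      change s * v (Fin.cast hm0.symm 0) ∈ p.asIdeal
      exact p.asIdeal.mul_mem_right _ hs
    have hp : ∀ v j, d 0 v j ∈ p.asIdeal := by
      intro v j
      have h1 : (fun j => d 0 v (Fin.cast hm0.symm j)) ∈ K := (hd0 _).1 ⟨v, rfl⟩
      have h2 : d 0 v (Fin.cast hm0.symm 0) ∈ p.asIdeal := h1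
      have h3 : j = Fin.cast hm0.symm 0 := by
        ext
        have := j.2
        simp only [Fin.val_cast, Fin.val_zero]
        omega
      rwa [h3]
    obtain ⟨H0, H1⟩ := dual_exact m d hd rs R (fun s hs => hsmul s (hrs s hs)) hreg
    have hses := trMod_ses m d hd rs.length H0 H1
    have hpd : ∀ i, i ≤ k + 1 → pdLE R i (trMod m d i) := by
      intro i
      induction i with
      | zero =>
        intro _
        exact (inferInstance : Module.Projective R (Module.Dual R (Fin (m 0) → R)))
      | succ i ih =>
        intro hi
        obtain ⟨j, hj⟩ := hses i (by omega)
        exact ⟨trMod m d i, ModuleCat.of R (Module.Dual R (Fin (m (i+1)) → R)), j, _,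
          (inferInstance : Module.Finite R (Module.Dual R (Fin (m (i+1)) → R))),
          (inferInstance : Module.Projective R (Module.Dual R (Fin (m (i+1)) → R))),
          hj, ih (by omega)⟩
    have hE := hpd (k+1) le_rfl
    have hinj : Function.Injective (d 0).dualMap := by
      rw [← LinearMap.ker_eq_bot, LinearMap.ker_eq_bot']
      intro φ hφ
      exact H0 (by omega) φ hφ
    have hnot := trMod_not_pd p m d hm hp k (fun i hi => hses i (by omega)) hinj
    refine ⟨trMod m d (k+1), trMod_finite m d _, ?_, fun q => ?_, ?_⟩
    · have h := pdim_le hE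
      intro h'
      rw [h', top_le_iff] at h
      exact absurd (WithBot.coe_injective h) (ENat.natCast_ne_top _)
    · by_cases hpq : p.asIdeal ≤ q.asIdeal
      · have h1 := hmono p q hpq
        rw [hn] at h1
        exact (pdim_le (pdLE_localized _ _ _ hE)).trans (by exact_mod_cast h1)
      · obtain ⟨s, hs, hsq⟩ := SetLike.not_le_iff_exists.1 hpq
        have h1 : pdLE (Localization.AtPrime q.asIdeal) 0 (localizeM R q (trMod m d (k+1))) :=
          trMod_proj m d hd k q.asIdeal.primeCompl s hsq (hsmul s hs)
        exact (pdim_le h1).trans (by exact_mod_cast Nat.zero_le _)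
    · refine le_antisymm (pdim_le (pdLE_localized _ _ _ hE)) (le_pdim ?_ ?_)
      · intro hsub
        apply hnot
        have : HasProjectiveDimensionLT (localizeM R p (trMod m d (k+1))) 0 :=
          (ModuleCat.isZero_of_subsingleton _).hasProjectiveDimensionLT_zero
        exact hasProjectiveDimensionLT_of_ge _ 0 _ (Nat.zero_le _)
      · intro j hj
        by_contra hlt
        apply hnot
        have := pdLE_hasPD j _ hj
        exact hasProjectiveDimensionLT_of_ge _ (j+1) _ (by omega)

end ResolvPaper
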